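/- A total X5-interpretation ⟨T,T⟩ is an equilibrium model of a theory Γ if and only if T is a ⊆-minimal set among consistent sets of explicit literals satisfying every formula of the Ferraris reduct Γ^T₊ = {φ^T₊ : φ ∈ Γ}. -/

import Mathlib

open scoped Classical

namespace X5Paper

/-- Explicit literals: an atom `p` or its explicit negation `∼p`. -/
inductive XLit (At : Type) : Type
  | pos : At → XLit At
  | neg : At → XLit At

/-- A set of explicit literals is consistent if it contains no atom together
with its explicit negation. -/
def Consistent {At : Type} (T : Set (XLit At)) : Prop :=
  ∀ p : At, ¬ (XLit.pos p ∈ T ∧ XLit.neg p ∈ T)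

/-- Nested expressions: ⊤, ⊥, atoms, ∧, ∨, default negation ¬, explicit negation ∼. -/
inductive NExp (At : Type) : Type
  | top : NExp At
  | bot : NExp At
  | atom : At → NExp At
  | conj : NExp At → NExp At → NExp At
  | disj : NExp At → NExp At → NExp At
  | dneg : NExp At → NExp At
  | xneg : NExp At → NExp At

variable {At : Type}

mutual
/-- Satisfaction `T ⊨ F` of a nested expression by a set of explicit literals. -/
def NExp.sat (T : Set (XLit At)) : NExp At → Prop
  | .top => True
  | .bot => False
  | .atom p => XLit.pos p ∈ T
  | .conj F G => NExp.sat T F ∧ NExp.sat T G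
  | .disj F G => NExp.sat T F ∨ NExp.sat T G
  | .dneg F => ¬ NExp.sat T F
  | .xneg F => NExp.fals T F

/-- Falsification `T ⫤ F` of a nested expression by a set of explicit literals. -/
def NExp.fals (T : Set (XLit At)) : NExp At → Prop
  | .top => False
  | .bot => True
  | .atom p => XLit.neg p ∈ T
  | .conj F G => NExp.fals T F ∨ NExp.fals T G
  | .disj F G => NExp.fals T F ∧ NExp.fals T G
  | .dneg F => NExp.sat T F
  | .xneg F => NExp.sat T F
end

/-- The reduct `F^T` of a nested expression. -/
noncomputable def NExp.reduct (T : Set (XLit At)) : NExp At → NExp At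
  | .top => .top
  | .bot => .bot
  | .atom p => .atom p
  | .conj F G => .conj (NExp.reduct T F) (NExp.reduct T G)
  | .disj F G => .disj (NExp.reduct T F) (NExp.reduct T G)
  | .dneg F => if NExp.sat T F then .bot else .top
  | .xneg F => .xneg (NExp.reduct T F)

/-- Formulas: atoms, ⊥, ∧, ∨, →, explicit negation ∼. -/
inductive Frm (At : Type) : Type
  | atom : At → Frm At
  | bot : Frm At
  | conj : Frm At → Frm At → Frm At
  | disj : Frm At → Frm At → Frm At
  | impl : Frm At → Frm At → Frm At
  | xneg : Frm At → Frm At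

/-- Default negation `¬φ := φ → ⊥`. -/
def Frm.neg (φ : Frm At) : Frm At := Frm.impl φ Frm.bot

/-- `⊤ := ¬⊥`. -/
def Frm.top : Frm At := Frm.neg Frm.bot

/-- Weak equivalence `φ ↔ ψ := (φ→ψ) ∧ (ψ→φ)`. -/
def Frm.iff (φ ψ : Frm At) : Frm At := Frm.conj (Frm.impl φ ψ) (Frm.impl ψ φ)

/-- Strong equivalence connective `φ ⇔ ψ := (φ↔ψ) ∧ (∼φ↔∼ψ)`. -/
def Frm.siff (φ ψ : Frm At) : Frm At :=
  Frm.conj (Frm.iff φ ψ) (Frm.iff (Frm.xneg φ) (Frm.xneg ψ))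

mutual
/-- X5 satisfaction `⟨H,T⟩ ⊨ φ`. -/
def Sat : Set (XLit At) → Set (XLit At) → Frm At → Prop
  | H, _, .atom p => XLit.pos p ∈ H
  | _, _, .bot => False
  | H, T, .conj φ ψ => Sat H T φ ∧ Sat H T ψ
  | H, T, .disj φ ψ => Sat H T φ ∨ Sat H T ψ
  | H, T, .impl φ ψ => (Sat H T φ → Sat H T ψ) ∧ (Sat T T φ → Sat T T ψ)
  | H, T, .xneg φ => Fals H T φ

/-- X5 falsification `⟨H,T⟩ ⫤ φ`. -/
def Fals : Set (XLit At) → Set (XLit At) → Frm At → Prop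
  | H, _, .atom p => XLit.neg p ∈ H
  | _, _, .bot => True
  | H, T, .conj φ ψ => Fals H T φ ∨ Fals H T ψ
  | H, T, .disj φ ψ => Fals H T φ ∧ Fals H T ψ
  | H, T, .impl φ ψ => Sat T T φ ∧ Fals H T ψ
  | H, T, .xneg φ => Sat H T φ
end

/-- X5 validity: satisfied by every X5-interpretation `⟨H,T⟩`. -/
def X5Valid (φ : Frm At) : Prop :=
  ∀ H T : Set (XLit At), Consistent H → Consistent T → H ⊆ T → Sat H T φ

/-- Nested expressions viewed as formulas (`¬F := F → ⊥`, `⊤ := ¬⊥`). -/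
def NExp.toFrm : NExp At → Frm At
  | .top => Frm.top
  | .bot => .bot
  | .atom p => .atom p
  | .conj F G => .conj F.toFrm G.toFrm
  | .disj F G => .disj F.toFrm G.toFrm
  | .dneg F => Frm.neg F.toFrm
  | .xneg F => .xneg F.toFrm

/-- Uniform substitution `φ[α/p]`. -/
noncomputable def Frm.subst (p : At) (α : Frm At) : Frm At → Frm At
  | .atom q => if q = p then α else .atom q
  | .bot => .bot
  | .conj φ ψ => .conj (Frm.subst p α φ) (Frm.subst p α ψ)
  | .disj φ ψ => .disj (Frm.subst p α φ) (Frm.subst p α ψ)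
  | .impl φ ψ => .impl (Frm.subst p α φ) (Frm.subst p α ψ)
  | .xneg φ => .xneg (Frm.subst p α φ)

/-- A formula contains no explicit negation. -/
def NoXneg : Frm At → Prop
  | .atom _ => True
  | .bot => True
  | .conj φ ψ => NoXneg φ ∧ NoXneg ψ
  | .disj φ ψ => NoXneg φ ∧ NoXneg ψ
  | .impl φ ψ => NoXneg φ ∧ NoXneg ψ
  | .xneg _ => False

/-- HT satisfaction for (∼-free) formulas; the `∼` clause is a dummy. -/
def HTSat : Set At → Set At → Frm At → Prop
  | H, _, .atom p => p ∈ H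
  | _, _, .bot => False
  | H, T, .conj φ ψ => HTSat H T φ ∧ HTSat H T ψ
  | H, T, .disj φ ψ => HTSat H T φ ∨ HTSat H T ψ
  | H, T, .impl φ ψ => (HTSat H T φ → HTSat H T ψ) ∧ (HTSat T T φ → HTSat T T ψ)
  | _, _, .xneg _ => False

/-- HT validity for ∼-free formulas. -/
def HTValid (φ : Frm At) : Prop :=
  ∀ H T : Set At, H ⊆ T → HTSat H T φ

/-- Atom `p` occurs in a formula. -/
def Frm.occurs (p : At) : Frm At → Prop
  | .atom q => q = p
  | .bot => False
  | .conj φ ψ => Frm.occurs p φ ∨ Frm.occurs p ψ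
  | .disj φ ψ => Frm.occurs p φ ∨ Frm.occurs p ψ
  | .impl φ ψ => Frm.occurs p φ ∨ Frm.occurs p ψ
  | .xneg φ => Frm.occurs p φ

/-- Atom `p` occurs only outside the scope of explicit negation `∼`. -/
def OutsideXneg (p : At) : Frm At → Prop
  | .atom _ => True
  | .bot => True
  | .conj φ ψ => OutsideXneg p φ ∧ OutsideXneg p ψ
  | .disj φ ψ => OutsideXneg p φ ∧ OutsideXneg p ψ
  | .impl φ ψ => OutsideXneg p φ ∧ OutsideXneg p ψ
  | .xneg φ => ¬ Frm.occurs p φ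

/-- A rule `F → G` of a program. -/
abbrev Rule (At : Type) := NExp At × NExp At

/-- `T` is a model of a program: it satisfies the head whenever it satisfies the body. -/
def NModels (T : Set (XLit At)) (Prog : Set (Rule At)) : Prop :=
  ∀ r ∈ Prog, NExp.sat T r.1 → NExp.sat T r.2

/-- The reduct `Π^T` of a program. -/
noncomputable def progReduct (T : Set (XLit At)) (Prog : Set (Rule At)) : Set (Rule At) :=
  (fun r : Rule At => (NExp.reduct T r.1, NExp.reduct T r.2)) '' Prog

/-- `T` is an answer set of `Π`: a ⊆-minimal (consistent) model of the reduct `Π^T`. -/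
def AnswerSet (Prog : Set (Rule At)) (T : Set (XLit At)) : Prop :=
  Consistent T ∧ NModels T (progReduct T Prog) ∧
    ∀ T' : Set (XLit At), Consistent T' → T' ⊆ T → NModels T' (progReduct T Prog) → T' = T

/-- The theory corresponding to a program: each rule `F → G` read as an implication. -/
def ruleTheory (Prog : Set (Rule At)) : Set (Frm At) :=
  (fun r : Rule At => Frm.impl r.1.toFrm r.2.toFrm) '' Prog

/-- `⟨T,T⟩` is an equilibrium model of the theory `Γ`. -/
def EqModel (Γ : Set (Frm At)) (T : Set (XLit At)) : Prop :=
  Consistent T ∧ (∀ φ ∈ Γ, Sat T T φ) ∧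
    ¬ ∃ H : Set (XLit At), Consistent H ∧ H ⊂ T ∧ ∀ φ ∈ Γ, Sat H T φ

mutual
/-- Generalized Ferraris reduct `φ^T₊` of a formula (a nested expression). -/
noncomputable def redPos (T : Set (XLit At)) : Frm At → NExp At
  | .atom p => if XLit.pos p ∈ T then .atom p else .bot
  | .bot => .bot
  | .conj α β => if Sat T T (Frm.conj α β) then .conj (redPos T α) (redPos T β) else .bot
  | .disj α β => if Sat T T (Frm.disj α β) then .disj (redPos T α) (redPos T β) else .bot
  | .impl α β => if Sat T T (Frm.impl α β) then .disj (.dneg (redPos T α)) (redPos T β) else .bot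
  | .xneg α => if Sat T T (Frm.xneg α) then .xneg (redNeg T α) else .bot

/-- Generalized Ferraris reduct `φ^T₋` of a formula (a nested expression). -/
noncomputable def redNeg (T : Set (XLit At)) : Frm At → NExp At
  | .atom p => if XLit.neg p ∈ T then .atom p else .top
  | .bot => .bot
  | .conj α β => if Fals T T (Frm.conj α β) then .conj (redNeg T α) (redNeg T β) else .top
  | .disj α β => if Fals T T (Frm.disj α β) then .disj (redNeg T α) (redNeg T β) else .top
  | .impl α β => if Fals T T (Frm.impl α β) then redNeg T β else .top
  | .xneg α => if Fals T T (Frm.xneg α) then .xneg (redPos T α) else .top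
end

mutual
/-- Generalized Ferraris reduct `F^T₊` of a nested expression. -/
noncomputable def nRedPos (T : Set (XLit At)) : NExp At → NExp At
  | .top => .top
  | .bot => .bot
  | .atom p => if XLit.pos p ∈ T then .atom p else .bot
  | .conj α β => if NExp.sat T (NExp.conj α β) then .conj (nRedPos T α) (nRedPos T β) else .bot
  | .disj α β => if NExp.sat T (NExp.disj α β) then .disj (nRedPos T α) (nRedPos T β) else .bot
  | .dneg α => if NExp.sat T (NExp.dneg α) then .dneg (nRedPos T α) else .bot
  | .xneg α => if NExp.sat T (NExp.xneg α) then .xneg (nRedNeg T α) else .bot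

/-- Generalized Ferraris reduct `F^T₋` of a nested expression. -/
noncomputable def nRedNeg (T : Set (XLit At)) : NExp At → NExp At
  | .top => .top
  | .bot => .bot
  | .atom p => if XLit.neg p ∈ T then .atom p else .top
  | .conj α β => if NExp.fals T (NExp.conj α β) then .conj (nRedNeg T α) (nRedNeg T β) else .top
  | .disj α β => if NExp.fals T (NExp.disj α β) then .disj (nRedNeg T α) (nRedNeg T β) else .top
  | .dneg α => if NExp.fals T (NExp.dneg α) then .bot else .top
  | .xneg α => if NExp.fals T (NExp.xneg α) then .xneg (nRedPos T α) else .top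
end

/-- The five-valued valuation `M(φ)` of `M = ⟨H,T⟩`. -/
noncomputable def val (H T : Set (XLit At)) : Frm At → ℤ
  | .atom p =>
      if XLit.pos p ∈ H then 2
      else if XLit.neg p ∈ H then -2
      else if XLit.pos p ∈ T then 1
      else if XLit.neg p ∈ T then -1
      else 0
  | .bot => -2
  | .conj φ ψ => min (val H T φ) (val H T ψ)
  | .disj φ ψ => max (val H T φ) (val H T ψ)
  | .impl φ ψ => if val H T φ ≤ max (val H T ψ) 0 then 2 else val H T ψ
  | .xneg φ => - val H T φ


/-! If `H ⊆ T`, whatever `⟨H,T⟩` satisfies or falsifies is already satisfied or falsified by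
`⟨T,T⟩`. Hence the guards of the reducts, which discard the subformulas that `T` does not satisfy
(or falsify), lose nothing, and by simultaneous induction `H ⊨ φ^T₊` iff `⟨H,T⟩ ⊨ φ` and
`H ⫤ φ^T₋` iff `⟨H,T⟩ ⫤ φ`. -/

section Reduct

variable {H T : Set (XLit At)} {F : NExp At} {P Q : Prop}

mutual

theorem Sat.persistent (h : H ⊆ T) : ∀ {φ : Frm At}, Sat H T φ → Sat T T φ
  | .atom _ => @h _
  | .bot => False.elim
  | .conj _ _ => And.imp (Sat.persistent h) (Sat.persistent h)
  | .disj _ _ => Or.imp (Sat.persistent h) (Sat.persistent h)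
  | .impl _ _ => fun hφ => ⟨hφ.2, hφ.2⟩
  | .xneg _ => Fals.persistent h

theorem Fals.persistent (h : H ⊆ T) : ∀ {φ : Frm At}, Fals H T φ → Fals T T φ
  | .atom _ => @h _
  | .bot => id
  | .conj _ _ => Or.imp (Fals.persistent h) (Fals.persistent h)
  | .disj _ _ => And.imp (Fals.persistent h) (Fals.persistent h)
  | .impl _ _ => And.imp_right (Fals.persistent h)
  | .xneg _ => Sat.persistent h

end

theorem NExp.sat_ite_bot_iff [Decidable P] (hQP : Q → P) (hF : P → (NExp.sat H F ↔ Q)) :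
    NExp.sat H (if P then F else .bot) ↔ Q := by
  split_ifs with hP
  · exact hF hP
  · exact iff_of_false id (mt hQP hP)

theorem NExp.fals_ite_top_iff [Decidable P] (hQP : Q → P) (hF : P → (NExp.fals H F ↔ Q)) :
    NExp.fals H (if P then F else .top) ↔ Q := by
  split_ifs with hP
  · exact hF hP
  · exact iff_of_false id (mt hQP hP)

mutual

theorem sat_redPos_iff (h : H ⊆ T) : ∀ φ : Frm At, NExp.sat H (redPos T φ) ↔ Sat H T φ
  | .atom _ => NExp.sat_ite_bot_iff (@h _) fun _ => Iff.rfl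
  | .bot => Iff.rfl
  | .conj α β => NExp.sat_ite_bot_iff (Sat.persistent h) fun _ =>
      and_congr (sat_redPos_iff h α) (sat_redPos_iff h β)
  | .disj α β => NExp.sat_ite_bot_iff (Sat.persistent h) fun _ =>
      or_congr (sat_redPos_iff h α) (sat_redPos_iff h β)
  | .impl α β => NExp.sat_ite_bot_iff (Sat.persistent h) fun hT => calc
      (¬ NExp.sat H (redPos T α) ∨ NExp.sat H (redPos T β))
        ↔ (NExp.sat H (redPos T α) → NExp.sat H (redPos T β)) := imp_iff_not_or.symm
      _ ↔ (Sat H T α → Sat H T β) := imp_congr (sat_redPos_iff h α) (sat_redPos_iff h β)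
      _ ↔ Sat H T (.impl α β) := (and_iff_left hT.2).symm
  | .xneg α => NExp.sat_ite_bot_iff (Fals.persistent h) fun _ => fals_redNeg_iff h α

theorem fals_redNeg_iff (h : H ⊆ T) : ∀ φ : Frm At, NExp.fals H (redNeg T φ) ↔ Fals H T φ
  | .atom _ => NExp.fals_ite_top_iff (@h _) fun _ => Iff.rfl
  | .bot => Iff.rfl
  | .conj α β => NExp.fals_ite_top_iff (Fals.persistent h) fun _ =>
      or_congr (fals_redNeg_iff h α) (fals_redNeg_iff h β)
  | .disj α β => NExp.fals_ite_top_iff (Fals.persistent h) fun _ =>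
      and_congr (fals_redNeg_iff h α) (fals_redNeg_iff h β)
  | .impl α β => NExp.fals_ite_top_iff (Fals.persistent h) fun hT => calc
      NExp.fals H (redNeg T β) ↔ Fals H T β := fals_redNeg_iff h β
      _ ↔ Fals H T (.impl α β) := (and_iff_right hT.1).symm
  | .xneg α => NExp.fals_ite_top_iff (Sat.persistent h) fun _ => sat_redPos_iff h α

end

theorem forall_sat_redPos_iff (Γ : Set (Frm At)) (h : H ⊆ T) :
    (∀ φ ∈ Γ, NExp.sat H (redPos T φ)) ↔ ∀ φ ∈ Γ, Sat H T φ :=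
  forall₂_congr fun φ _ => sat_redPos_iff h φ

end Reduct

/-- `⟨T,T⟩` is an equilibrium model of a theory `Γ` iff `T` is a
⊆-minimal set among consistent sets of explicit literals satisfying every
formula of the Ferraris reduct `Γ^T₊`. -/
theorem stmt10 (At : Type) (Γ : Set (Frm At)) (T : Set (XLit At))
    (hT : Consistent T) :
    EqModel Γ T ↔
      ((∀ φ ∈ Γ, NExp.sat T (redPos T φ)) ∧
        ∀ H : Set (XLit At), Consistent H → (∀ φ ∈ Γ, NExp.sat H (redPos T φ)) →
          ¬ H ⊂ T) := by
  constructor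
  · rintro ⟨-, hsat, hmin⟩
    refine ⟨(forall_sat_redPos_iff Γ subset_rfl).2 hsat, fun H hH hred hHT => hmin ?_⟩
    exact ⟨H, hH, hHT, (forall_sat_redPos_iff Γ hHT.subset).1 hred⟩
  · rintro ⟨hred, hmin⟩
    refine ⟨hT, (forall_sat_redPos_iff Γ subset_rfl).1 hred, ?_⟩
    rintro ⟨H, hH, hHT, hsat⟩
    exact hmin H hH ((forall_sat_redPos_iff Γ hHT.subset).2 hsat) hHT

end X5Paper
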